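/- Let $f(z) = \sum_{n\geq -n_0} a(n)e^{2\pi i n z}$ be a weakly holomorphic modular form of weight $k \in \frac{1}{2}\mathbb{N}$ for $\Gamma_0(N)$, let $b(n)$ be the Fourier coefficients of $g(z) = (\sqrt{N}z)^{-k} f(-1/(Nz))$, and suppose $a(n), b(n) = O(e^{C_f\sqrt{n}})$. Then for any $C > \max(C_f^2\sqrt{N}/(8\pi), 2\pi n_0/\sqrt{N})$ and all $X > 0$, with $D_n := C + 2\pi n/\sqrt{N}$: $\sum_{n\geq -n_0} a(n) K_0(2\sqrt{D_n(C + \sqrt{N}X)}) = i^k C^{k/2} \sum_{n\geq -n_0} b(n)(\sqrt{N}X + D_n)^{-k/2} K_k(2\sqrt{C(D_n + \sqrt{N}X)})$, with both series converging absolutely. -/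

import Mathlib

open MeasureTheory Set Real

/-- The modified Bessel function of the second kind, via its integral representation. -/
noncomputable def besselK (s : ℂ) (z : ℝ) : ℂ :=
  (1 / 2) * ∫ t in Ioi (0 : ℝ), Complex.exp (↑(-(z / 2) * (t + 1 / t))) * (t : ℂ) ^ (s - 1)

/-!
Everything rests on the integral `∫₀^∞ e^{-(αt + β/t)} t^{s-1} dt = 2 (β/α)^{s/2} K_s(2√(αβ))`
(`intW_scale`, `besselK_eq`).

With `E = C + √N X`, each term on the left is `a(n)/2` times such an integral with `α = D_n`,
`β = E`, `s = 0`. Summing under the integral sign produces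
`½ ∫₀^∞ f(it/√N) e^{-Ct - E/t} dt/t`. The Fricke relation on the imaginary axis
(`fricke_imag`) replaces `f(it/√N)` by `i^k t^{-k} g(i/(√N t))`, and expanding `g` gives the
integrals with `α = C`, `β = D_n + √N X`, `s = -k`, which are the terms on the right because of
the symmetry `t ↦ 1/t` (`intW_neg`).

Both interchanges of sum and integral, as well as the absolute convergence, follow from one
estimate (`summable_coeff_intW`): `K_s(2y)` decays like `e^{-2y}`, and with `m = n + n₀` one has
`D_n ≥ 2πm/√N` since `C > 2πn₀/√N`, so the Bessel factor is
`O(e^{-2√(2πC/√N) √m})`, which beats `e^{C_f √m}` exactly when `C > C_f² √N/(8π)`.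
-/

/-- The integrand `e^{-(αt + β/t)} t^{s-1}` whose integral over `t > 0` is
`2 (β/α)^{s/2} K_s(2√(αβ))`. -/
noncomputable def kerW (s α β t : ℝ) : ℝ := Real.exp (-(α * t + β / t)) * t ^ (s - 1)

/-- The integral `∫₀^∞ e^{-(αt + β/t)} t^{s-1} dt`. -/
noncomputable def intW (s α β : ℝ) : ℝ := ∫ t in Ioi (0 : ℝ), kerW s α β t

lemma kerW_nonneg (s α β : ℝ) {t : ℝ} (ht : 0 < t) : 0 ≤ kerW s α β t := by
  unfold kerW; positivity

lemma intW_nonneg (s α β : ℝ) : 0 ≤ intW s α β :=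
  setIntegral_nonneg measurableSet_Ioi fun _ ht => kerW_nonneg s α β ht

/-- Near `0` the factor `e^{-β/t}` is at most `n! (t/β)^n` for every `n`, which dominates the
integrand by that of a Gamma integral. -/
lemma kerW_integrableOn (s : ℝ) {α β : ℝ} (hα : 0 < α) (hβ : 0 < β) :
    IntegrableOn (kerW s α β) (Ioi 0) := by
  obtain ⟨n, hn⟩ := exists_nat_gt (-s)
  have h1 : IntegrableOn (fun x : ℝ => (n.factorial / β ^ n : ℝ) *
      (x ^ (s - 1 + n) * Real.exp (-α * x ^ (1 : ℝ)))) (Ioi 0) :=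
    (integrableOn_rpow_mul_exp_neg_mul_rpow (by linarith) one_pos hα).const_mul _
  refine Integrable.mono' h1 ?_ ?_
  · refine ContinuousOn.aestronglyMeasurable ?_ measurableSet_Ioi
    unfold kerW
    refine ContinuousOn.mul (Real.continuous_exp.comp_continuousOn ?_) ?_
    · refine ((continuousOn_const.mul continuousOn_id).add
        (continuousOn_const.div continuousOn_id fun x hx => ne_of_gt hx)).neg
    · exact continuousOn_id.rpow_const fun x hx => Or.inl (ne_of_gt hx)
  · refine (ae_restrict_iff' measurableSet_Ioi).2 (Filter.Eventually.of_forall fun t ht => ?_)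
    have ht : 0 < t := ht
    rw [Real.norm_of_nonneg (kerW_nonneg s α β ht)]
    have h2 := Real.pow_div_factorial_le_exp (β / t) (by positivity) n
    have h3 : Real.exp (-(β / t)) ≤ n.factorial / β ^ n * t ^ n := by
      rw [Real.exp_neg]
      refine (inv_anti₀ (by positivity) h2).trans (le_of_eq ?_)
      rw [div_pow]
      field_simp
    unfold kerW
    rw [neg_add, Real.exp_add, Real.rpow_add ht, Real.rpow_natCast, Real.rpow_one, neg_mul]
    calc _ ≤ Real.exp (-(α * t)) * (n.factorial / β ^ n * t ^ n) * t ^ (s - 1) := by gcongr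
      _ = _ := by ring

/-- The substitution `t ↦ √(β/α) t` makes the exponent symmetric. -/
lemma intW_scale (s : ℝ) {α β : ℝ} (hα : 0 < α) (hβ : 0 < β) :
    intW s α β = √(β / α) ^ s * intW s √(α * β) √(α * β) := by
  have hr : 0 < √(β / α) := by positivity
  have h := integral_comp_mul_left_Ioi (kerW s α β) 0 hr
  rw [mul_zero, smul_eq_mul] at h
  have e1 : α * √(β / α) = √(α * β) := by
    rw [eq_comm, Real.sqrt_eq_iff_mul_self_eq (by positivity) (by positivity)]
    have := Real.mul_self_sqrt (show 0 ≤ β / α by positivity)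
    calc α * β = α * α * (√(β / α) * √(β / α)) := by rw [this]; field_simp
      _ = _ := by ring
  have e2 : β / √(β / α) = √(α * β) := by
    rw [div_eq_iff hr.ne', ← e1]
    have := Real.mul_self_sqrt (show 0 ≤ β / α by positivity)
    calc β = α * (β / α) := by field_simp
      _ = α * (√(β / α) * √(β / α)) := by rw [this]
      _ = _ := by ring
  have h2 : ∫ x in Ioi (0 : ℝ), kerW s α β (√(β / α) * x)
      = √(β / α) ^ (s - 1) * intW s √(α * β) √(α * β) := by
    unfold intW
    rw [← integral_const_mul]
    refine setIntegral_congr_fun measurableSet_Ioi fun t ht => ?_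
    have ht : 0 < t := ht
    simp only [kerW]
    rw [Real.mul_rpow hr.le ht.le, ← mul_assoc α, e1, ← div_div, e2]
    ring
  rw [h2] at h
  have h3 : intW s α β
      = √(β / α) * (√(β / α) ^ (s - 1) * intW s √(α * β) √(α * β)) := by
    rw [h]; unfold intW; field_simp
  rw [h3, ← mul_assoc]
  congr 1
  rw [Real.rpow_sub_one hr.ne']
  field_simp

/-- The substitution `t ↦ 1/t`; with `intW_scale` this contains `K_{-s} = K_s`. -/
lemma intW_neg (s α β : ℝ) : intW (-s) α β = intW s β α := by
  have h := integral_comp_rpow_Ioi (kerW (-s) α β) (p := -1) (by norm_num)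
  unfold intW
  rw [← h]
  refine setIntegral_congr_fun measurableSet_Ioi fun t ht => ?_
  have ht : 0 < t := ht
  simp only [kerW, smul_eq_mul, abs_neg, abs_one, one_mul, Real.rpow_neg_one]
  have : t ^ (-1 - 1 : ℝ) * t⁻¹ ^ (-s - 1) = t ^ (s - 1) := by
    rw [← Real.rpow_neg_one t, ← Real.rpow_mul ht.le, ← Real.rpow_add ht]
    congr 1; ring
  rw [← this, show α * t⁻¹ + β / t⁻¹ = β * t + α / t by rw [div_inv_eq_mul]; ring]
  ring

lemma besselK_eq (s y : ℝ) : besselK (s : ℂ) (2 * y) = ((intW s y y / 2 : ℝ) : ℂ) := by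
  have : ∫ t in Ioi (0 : ℝ), Complex.exp (↑(-(2 * y / 2) * (t + 1 / t))) * (t : ℂ) ^ ((s : ℂ) - 1)
      = ((intW s y y : ℝ) : ℂ) := by
    unfold intW
    rw [← integral_complex_ofReal]
    refine setIntegral_congr_fun measurableSet_Ioi fun t ht => ?_
    have ht : 0 < t := ht
    simp only [kerW]
    rw [Complex.ofReal_mul (Real.exp _), Complex.ofReal_exp, Complex.ofReal_cpow ht.le,
      Complex.ofReal_sub s 1, Complex.ofReal_one]
    congr 2
    push_cast
    ring
  unfold besselK
  rw [this]
  push_cast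
  ring

/-- Since `t + 1/t ≥ 2`, the integral decays like `e^{-2y}`. -/
lemma intW_decay (s : ℝ) {y₀ y : ℝ} (h0 : 0 < y₀) (hy : y₀ ≤ y) :
    intW s y y ≤ Real.exp (-(2 * (y - y₀))) * intW s y₀ y₀ := by
  unfold intW
  rw [← integral_const_mul]
  refine setIntegral_mono_on (kerW_integrableOn s (h0.trans_le hy) (h0.trans_le hy))
    ((kerW_integrableOn s h0 h0).const_mul _) measurableSet_Ioi fun t ht => ?_
  have ht : 0 < t := ht
  unfold kerW
  rw [← mul_assoc, ← Real.exp_add]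
  gcongr
  have h2 : 2 ≤ t + 1 / t := by
    have : t + 1 / t - 2 = (t - 1) ^ 2 / t := by field_simp; ring
    have : 0 ≤ (t - 1) ^ 2 / t := by positivity
    linarith
  have e : ∀ w : ℝ, w * t + w / t = w * (t + 1 / t) := fun w => by ring
  rw [e, e]
  nlinarith

lemma summable_exp_neg_sqrt {δ : ℝ} (hδ : 0 < δ) :
    Summable fun m : ℕ => Real.exp (-δ * √(m : ℝ)) := by
  have h1 : Summable fun m : ℕ => (m : ℝ) ^ (-2 : ℝ) := Real.summable_nat_rpow.2 (by norm_num)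
  refine summable_of_isBigO_nat h1 ?_
  have h2 := (isLittleO_exp_neg_mul_rpow_atTop hδ (-4)).isBigO.comp_tendsto
    (Real.tendsto_sqrt_atTop.comp tendsto_natCast_atTop_atTop)
  refine h2.congr_right fun m => ?_
  simp only [Function.comp]
  rw [Real.sqrt_eq_rpow, ← Real.rpow_mul (Nat.cast_nonneg m)]
  norm_num

/-- Subexponential coefficients against Bessel decay: `4rC > Cf²` says that `e^{-2√(rCm)}` beats
`e^{Cf√m}`. -/
lemma summable_coeff_intW (s : ℝ) {c : ℕ → ℂ} {A Cf r C P₀ Q : ℝ} {P : ℕ → ℝ}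
    (hc : ∀ m, ‖c m‖ ≤ A * Real.exp (Cf * √(m : ℝ)))
    (hP₀ : 0 < P₀) (hr : 0 < r) (hC : 0 < C) (hCf : Cf ^ 2 < 4 * r * C) (hQ : C ≤ Q)
    (hP : ∀ m, P₀ ≤ P m) (hPm : ∀ m : ℕ, r * m ≤ P m) :
    Summable fun m => ‖c m‖ * intW s √(P m * Q) √(P m * Q) := by
  have hA : 0 ≤ A := by
    have := (norm_nonneg _).trans (hc 0)
    exact nonneg_of_mul_nonneg_left this (Real.exp_pos _)
  have hδ : 0 < 2 * √(r * C) - Cf := by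
    have : Cf < √(4 * r * C) := Real.lt_sqrt_of_sq_lt hCf
    have e : √(4 * r * C) = 2 * √(r * C) := by
      rw [mul_assoc, Real.sqrt_mul (by norm_num), show (4 : ℝ) = 2 ^ 2 by norm_num,
        Real.sqrt_sq (by norm_num)]
    linarith
  have hy₀ : 0 < √(P₀ * C) := by positivity
  refine Summable.of_nonneg_of_le (fun m => mul_nonneg (norm_nonneg _) (intW_nonneg _ _ _))
    (fun m => ?_) ((summable_exp_neg_sqrt hδ).mul_left
      (A * Real.exp (2 * √(P₀ * C)) * intW s √(P₀ * C) √(P₀ * C)))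
  have hPpos := hP₀.trans_le (hP m)
  have hle : √(P₀ * C) ≤ √(P m * Q) :=
    Real.sqrt_le_sqrt (mul_le_mul (hP m) hQ hC.le hPpos.le)
  have hle2 : √(r * C) * √(m : ℝ) ≤ √(P m * Q) := by
    rw [← Real.sqrt_mul (by positivity)]
    refine Real.sqrt_le_sqrt ?_
    calc r * C * m = r * m * C := by ring
      _ ≤ _ := mul_le_mul (hPm m) hQ hC.le hPpos.le
  calc ‖c m‖ * intW s √(P m * Q) √(P m * Q)
      ≤ A * Real.exp (Cf * √(m : ℝ)) *
        (Real.exp (-(2 * (√(P m * Q) - √(P₀ * C)))) * intW s √(P₀ * C) √(P₀ * C)) :=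
        mul_le_mul (hc m) (intW_decay s hy₀ hle) (intW_nonneg _ _ _) (by positivity)
    _ = A * Real.exp (Cf * √(m : ℝ) + -(2 * (√(P m * Q) - √(P₀ * C)))) *
        intW s √(P₀ * C) √(P₀ * C) := by rw [Real.exp_add]; ring
    _ ≤ A * Real.exp (2 * √(P₀ * C) + -(2 * √(r * C) - Cf) * √(m : ℝ)) *
        intW s √(P₀ * C) √(P₀ * C) := by
        refine mul_le_mul_of_nonneg_right (mul_le_mul_of_nonneg_left
          (Real.exp_le_exp.2 ?_) hA) (intW_nonneg _ _ _)
        linarith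
    _ = _ := by rw [Real.exp_add]; ring

/-- The finitely many coefficients of negative index only enlarge the constant. -/
lemma coeff_bound {a : ℤ → ℂ} {A Cf : ℝ} (hCf : 0 < Cf) (n₀ : ℕ)
    (h : ∀ m : ℕ, ‖a (m : ℤ)‖ ≤ A * Real.exp (Cf * √(m : ℝ))) :
    ∃ A' : ℝ, ∀ m : ℕ, ‖a ((m : ℤ) - n₀)‖ ≤ A' * Real.exp (Cf * √(m : ℝ)) := by
  have hA : 0 ≤ A := by
    have := (norm_nonneg _).trans (h 0)
    exact nonneg_of_mul_nonneg_left this (Real.exp_pos _)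
  have hS : 0 ≤ ∑ j ∈ Finset.range n₀, ‖a ((j : ℤ) - n₀)‖ :=
    Finset.sum_nonneg fun _ _ => norm_nonneg _
  refine ⟨A + ∑ j ∈ Finset.range n₀, ‖a ((j : ℤ) - n₀)‖, fun m => ?_⟩
  rcases lt_or_ge m n₀ with hm | hm
  · have h1 : ‖a ((m : ℤ) - n₀)‖ ≤ ∑ j ∈ Finset.range n₀, ‖a ((j : ℤ) - n₀)‖ :=
      Finset.single_le_sum (f := fun j : ℕ => ‖a ((j : ℤ) - n₀)‖)
        (fun _ _ => norm_nonneg _) (Finset.mem_range.2 hm)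
    have h2 : 1 ≤ Real.exp (Cf * √(m : ℝ)) := Real.one_le_exp (by positivity)
    nlinarith
  · obtain ⟨d, rfl⟩ := Nat.exists_eq_add_of_le hm
    have e : (((n₀ + d : ℕ) : ℤ) - n₀) = (d : ℤ) := by push_cast; ring
    rw [e]
    refine (h d).trans (mul_le_mul (by linarith) (Real.exp_le_exp.2 ?_)
      (Real.exp_pos _).le (by linarith))
    gcongr
    omega

/-- Termwise integration, with the Bessel summability as the only input. -/
lemma hasSum_intW (s : ℝ) {c : ℕ → ℂ} {α β : ℕ → ℝ} (hα : ∀ m, 0 < α m) (hβ : ∀ m, 0 < β m)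
    (hs : Summable fun m => ‖c m‖ * intW s (α m) (β m)) :
    HasSum (fun m => c m * (intW s (α m) (β m) : ℂ))
      (∫ t in Ioi (0 : ℝ), ∑' m, c m * (kerW s (α m) (β m) t : ℂ)) := by
  have h := hasSum_integral_of_summable_integral_norm (μ := volume.restrict (Ioi (0 : ℝ)))
    (F := fun (m : ℕ) (t : ℝ) => c m * (kerW s (α m) (β m) t : ℂ))
    (fun m => ((kerW_integrableOn s (hα m) (hβ m)).ofReal).const_mul _) (by
      refine hs.congr fun m => ?_
      unfold intW
      rw [← integral_const_mul]
      refine setIntegral_congr_fun measurableSet_Ioi fun t ht => ?_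
      simp only [norm_mul, Complex.norm_real, Real.norm_of_nonneg (kerW_nonneg s _ _ ht)])
  have e : (fun m => ∫ t in Ioi (0 : ℝ), c m * (kerW s (α m) (β m) t : ℂ))
      = fun m => c m * (intW s (α m) (β m) : ℂ) := by
    funext m
    unfold intW
    rw [integral_const_mul, integral_complex_ofReal]
  rwa [e] at h

/-- The Fricke relation on the imaginary axis: `f(it/√N) = i^k t^{-k} g(i/(√N t))`. -/
lemma fricke_imag {N : ℕ} (hN : 1 ≤ N) {k : ℝ} {f g : ℂ → ℂ}
    (hg : ∀ z : ℂ, 0 < z.im →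
      g z = ((Real.sqrt N : ℂ) * z) ^ (-(k : ℂ)) * f (-1 / ((N : ℂ) * z)))
    {t : ℝ} (ht : 0 < t) :
    f (Complex.I * ((t / √(N : ℝ) : ℝ) : ℂ))
      = Complex.I ^ (k : ℂ) * ((t ^ (-k) : ℝ) : ℂ)
        * g (Complex.I * ((1 / (√(N : ℝ) * t) : ℝ) : ℂ)) := by
  have hN' : (0 : ℝ) < N := by exact_mod_cast hN
  have hs : 0 < √(N : ℝ) := Real.sqrt_pos.2 hN'
  have hsC : ((√(N : ℝ) : ℝ) : ℂ) ≠ 0 := by exact_mod_cast hs.ne'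
  have htC : (t : ℂ) ≠ 0 := by exact_mod_cast ht.ne'
  have hNC : (N : ℂ) = ((√(N : ℝ) : ℝ) : ℂ) * ((√(N : ℝ) : ℝ) : ℂ) := by
    rw [← Complex.ofReal_mul, Real.mul_self_sqrt hN'.le, Complex.ofReal_natCast]
  rw [hg _ (by simp; positivity)]
  have e1 : (-1 : ℂ) / ((N : ℂ) * (Complex.I * ((1 / (√(N : ℝ) * t) : ℝ) : ℂ)))
      = Complex.I * ((t / √(N : ℝ) : ℝ) : ℂ) := by
    rw [hNC]; push_cast; field_simp; simp
  have e2 : ((√(N : ℝ) : ℝ) : ℂ) * (Complex.I * ((1 / (√(N : ℝ) * t) : ℝ) : ℂ))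
      = ((t⁻¹ : ℝ) : ℂ) * Complex.I := by
    push_cast; field_simp
  have e3 : (((t⁻¹ : ℝ) : ℂ) * Complex.I) ^ (-(k : ℂ))
      = ((t ^ k : ℝ) : ℂ) * Complex.I ^ (-(k : ℂ)) := by
    rw [Complex.cpow_def_of_ne_zero (by simp [ht.ne']),
      Complex.log_ofReal_mul (inv_pos.2 ht) Complex.I_ne_zero, add_mul, Complex.exp_add,
      Complex.cpow_def_of_ne_zero Complex.I_ne_zero, Real.rpow_def_of_pos ht, Real.log_inv]
    push_cast
    ring_nf
  rw [e1, e2, e3, Complex.cpow_neg, Real.rpow_neg ht.le, Complex.ofReal_inv]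
  have h1 : Complex.I ^ (k : ℂ) ≠ 0 := by
    rw [Complex.cpow_def_of_ne_zero Complex.I_ne_zero]; exact Complex.exp_ne_zero _
  have h2 : ((t ^ k : ℝ) : ℂ) ≠ 0 := by
    exact_mod_cast (Real.rpow_pos_of_pos ht k).ne'
  field_simp

/-- Summation formula for a weakly holomorphic modular form `f` of weight `k ∈ ½ℕ`
for `Γ₀(N)` with Fourier coefficients `a(n)` (`n ≥ -n₀`), where `b(n)` are the Fourier
coefficients of `g(z) = (√N z)^{-k} f(-1/(Nz))`, and `a(n), b(n) = O(e^{C_f √n})`. -/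
theorem summation_formula_weakly_holomorphic
    (N : ℕ) (hN : 1 ≤ N) (k : ℝ) (hk : ∃ j : ℕ, k = j / 2) (n₀ : ℕ)
    (f g : ℂ → ℂ) (a b : ℤ → ℂ)
    (hf : ∀ z : ℂ, 0 < z.im →
      f z = ∑' m : ℕ, a ((m : ℤ) - n₀)
        * Complex.exp (2 * π * Complex.I * (((m : ℝ) - n₀ : ℝ) : ℂ) * z))
    (hg : ∀ z : ℂ, 0 < z.im →
      g z = ((Real.sqrt N : ℂ) * z) ^ (-(k : ℂ)) * f (-1 / ((N : ℂ) * z)))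
    (hgexp : ∀ z : ℂ, 0 < z.im →
      g z = ∑' m : ℕ, b ((m : ℤ) - n₀)
        * Complex.exp (2 * π * Complex.I * (((m : ℝ) - n₀ : ℝ) : ℂ) * z))
    (Cf : ℝ) (hCf : 0 < Cf)
    (hab : ∃ A : ℝ, ∀ m : ℕ,
      ‖a (m : ℤ)‖ ≤ A * Real.exp (Cf * Real.sqrt m) ∧
      ‖b (m : ℤ)‖ ≤ A * Real.exp (Cf * Real.sqrt m))
    (C : ℝ) (hC : C > max (Cf ^ 2 * Real.sqrt N / (8 * π)) (2 * π * n₀ / Real.sqrt N))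
    (X : ℝ) (hX : 0 < X) :
    Summable (fun m : ℕ =>
      ‖a ((m : ℤ) - n₀)
        * besselK 0 (2 * Real.sqrt ((C + 2 * π * ((m : ℝ) - n₀) / Real.sqrt N)
            * (C + Real.sqrt N * X)))‖) ∧
    Summable (fun m : ℕ =>
      ‖b ((m : ℤ) - n₀)
        * ((Real.sqrt N * X + (C + 2 * π * ((m : ℝ) - n₀) / Real.sqrt N) : ℝ) : ℂ)
            ^ (-(k : ℂ) / 2)
        * besselK (k : ℂ) (2 * Real.sqrt (C * ((C + 2 * π * ((m : ℝ) - n₀) / Real.sqrt N)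
            + Real.sqrt N * X)))‖) ∧
    (∑' m : ℕ, a ((m : ℤ) - n₀)
        * besselK 0 (2 * Real.sqrt ((C + 2 * π * ((m : ℝ) - n₀) / Real.sqrt N)
            * (C + Real.sqrt N * X))))
      = Complex.I ^ (k : ℂ) * (C : ℂ) ^ ((k : ℂ) / 2)
        * ∑' m : ℕ, b ((m : ℤ) - n₀)
            * ((Real.sqrt N * X + (C + 2 * π * ((m : ℝ) - n₀) / Real.sqrt N) : ℝ) : ℂ)
                ^ (-(k : ℂ) / 2)
            * besselK (k : ℂ) (2 * Real.sqrt (C * ((C + 2 * π * ((m : ℝ) - n₀) / Real.sqrt N)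
                + Real.sqrt N * X))) := by
  obtain ⟨A, hA⟩ := hab
  obtain ⟨A₁, ha⟩ := coeff_bound hCf n₀ fun m => (hA m).1
  obtain ⟨A₂, hb⟩ := coeff_bound hCf n₀ fun m => (hA m).2
  have hk0 : 0 ≤ k := by obtain ⟨j, rfl⟩ := hk; positivity
  have hN' : (0 : ℝ) < N := by exact_mod_cast hN
  have hs : 0 < √(N : ℝ) := Real.sqrt_pos.2 hN'
  have hsC : ((√(N : ℝ) : ℝ) : ℂ) ≠ 0 := by exact_mod_cast hs.ne'
  have hC1 : Cf ^ 2 * √(N : ℝ) / (8 * π) < C := (le_max_left _ _).trans_lt hC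
  have hC2 : 2 * π * n₀ / √(N : ℝ) < C := (le_max_right _ _).trans_lt hC
  have hC0 : 0 < C := lt_of_le_of_lt (by positivity) hC2
  have hY : 0 < √(N : ℝ) * X := by positivity
  set Y := √(N : ℝ) * X with hYdef
  set r := 2 * π / √(N : ℝ) with hr
  have hr0 : 0 < r := by positivity
  have hrC : Cf ^ 2 < 4 * r * C := by
    rw [div_lt_iff₀ (by positivity)] at hC1
    have : 4 * r * C = C * (8 * π) / √(N : ℝ) := by rw [hr]; ring
    rw [this, lt_div_iff₀ hs]
    exact hC1
  set D : ℕ → ℝ := fun m => C + 2 * π * ((m : ℝ) - n₀) / √(N : ℝ) with hD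
  have hDr : ∀ m, D m = (C - 2 * π * n₀ / √(N : ℝ)) + r * m := fun m => by
    simp only [hD, hr]; ring
  have hP₀ : 0 < C - 2 * π * n₀ / √(N : ℝ) := by linarith
  have hD0 : ∀ m, C - 2 * π * n₀ / √(N : ℝ) ≤ D m := fun m => by
    rw [hDr]
    have : 0 ≤ r * m := by positivity
    linarith
  have hDm : ∀ m : ℕ, r * m ≤ D m := fun m => by rw [hDr]; linarith
  have hDpos : ∀ m, 0 < D m := fun m => hP₀.trans_le (hD0 m)
  have hsum1 := summable_coeff_intW 0 (P := D) (Q := C + Y) ha hP₀ hr0 hC0 hrC (by linarith)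
    hD0 hDm
  have hsum2 := summable_coeff_intW k (P := fun m => D m + Y) (Q := C) hb hP₀ hr0 hC0 hrC le_rfl
    (fun m => by linarith [hD0 m]) (fun m => by linarith [hDm m])
  -- The terms on both sides as integrals.
  have hT1 : ∀ m : ℕ, a ((m : ℤ) - n₀) * besselK 0 (2 * √(D m * (C + Y)))
      = 1 / 2 * (a ((m : ℤ) - n₀) * (intW 0 (D m) (C + Y) : ℂ)) := fun m => by
    have h := besselK_eq 0 √(D m * (C + Y))
    rw [Complex.ofReal_zero] at h
    rw [h, intW_scale 0 (hDpos m) (show 0 < C + Y by linarith), Real.rpow_zero]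
    push_cast
    ring
  have hT2 : ∀ m : ℕ, (C : ℂ) ^ ((k : ℂ) / 2) * (b ((m : ℤ) - n₀)
        * ((Y + D m : ℝ) : ℂ) ^ (-(k : ℂ) / 2) * besselK (k : ℂ) (2 * √(C * (D m + Y))))
      = 1 / 2 * (b ((m : ℤ) - n₀) * (intW (-k) C (D m + Y) : ℂ)) := fun m => by
    have hβ : 0 < D m + Y := by linarith [hDpos m]
    have e1 : (C : ℂ) ^ ((k : ℂ) / 2) = ((C ^ (k / 2) : ℝ) : ℂ) := by
      rw [Complex.ofReal_cpow hC0.le]; push_cast; rfl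
    have e2 : ((Y + D m : ℝ) : ℂ) ^ (-(k : ℂ) / 2) = (((D m + Y) ^ (-k / 2) : ℝ) : ℂ) := by
      rw [Complex.ofReal_cpow hβ.le, add_comm Y]; push_cast; rfl
    have e3 : √(C / (D m + Y)) ^ k = C ^ (k / 2) * (D m + Y) ^ (-k / 2) := by
      rw [Real.sqrt_eq_rpow, ← Real.rpow_mul (by positivity), Real.div_rpow hC0.le hβ.le,
        neg_div, Real.rpow_neg hβ.le, one_div_mul_eq_div, div_eq_mul_inv]
    rw [e1, e2, besselK_eq, intW_neg, intW_scale k hβ hC0, e3, mul_comm C (D m + Y)]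
    push_cast
    ring
  have hs1 : Summable fun m : ℕ => ‖a ((m : ℤ) - n₀)‖ * intW 0 (D m) (C + Y) := by
    refine hsum1.congr fun m => ?_
    rw [intW_scale 0 (hDpos m) (show 0 < C + Y by linarith), Real.rpow_zero, one_mul]
  have hS2 : Summable fun m : ℕ => ‖b ((m : ℤ) - n₀)
        * ((Y + D m : ℝ) : ℂ) ^ (-(k : ℂ) / 2) * besselK (k : ℂ) (2 * √(C * (D m + Y)))‖ := by
    refine Summable.of_nonneg_of_le (fun _ => norm_nonneg _) (fun m => ?_)
      (hsum2.mul_left (Y ^ (-k / 2) / 2))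
    have hβ : 0 < Y + D m := by linarith [hDpos m]
    have e2 : ((Y + D m : ℝ) : ℂ) ^ (-(k : ℂ) / 2) = (((Y + D m) ^ (-k / 2) : ℝ) : ℂ) := by
      rw [Complex.ofReal_cpow hβ.le]; push_cast; rfl
    have h1 : (Y + D m) ^ (-k / 2) ≤ Y ^ (-k / 2) :=
      Real.rpow_le_rpow_of_nonpos hY (by linarith [hDpos m]) (by linarith)
    have h0 := intW_nonneg k √((D m + Y) * C) √((D m + Y) * C)
    rw [e2, besselK_eq, norm_mul, norm_mul, Complex.norm_real, Complex.norm_real,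
      mul_comm C (D m + Y), Real.norm_of_nonneg (by positivity), Real.norm_of_nonneg (by linarith)]
    calc _ = (Y + D m) ^ (-k / 2) * (‖b ((m : ℤ) - n₀)‖ *
            intW k √((D m + Y) * C) √((D m + Y) * C) / 2) := by ring
      _ ≤ Y ^ (-k / 2) * (‖b ((m : ℤ) - n₀)‖ *
            intW k √((D m + Y) * C) √((D m + Y) * C) / 2) := by gcongr
      _ = _ := by ring
  have hs2 : Summable fun m : ℕ => ‖b ((m : ℤ) - n₀)‖ * intW (-k) C (D m + Y) := by
    refine (hS2.mul_left (2 * ‖(C : ℂ) ^ ((k : ℂ) / 2)‖)).congr fun m => ?_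
    have h := congrArg norm (hT2 m)
    rw [norm_mul, norm_mul (1 / 2 : ℂ), norm_mul (b _) ((intW _ _ _ : ℝ) : ℂ), Complex.norm_real,
      Real.norm_of_nonneg (intW_nonneg _ _ _)] at h
    rw [mul_assoc, h]
    norm_num
    ring
  have H1 := hasSum_intW 0 hDpos (fun _ => show 0 < C + Y by linarith) hs1
  have H2 := hasSum_intW (-k) (fun _ => hC0)
    (fun m => show 0 < D m + Y by linarith [hDpos m]) hs2
  -- The two integrands agree pointwise up to the factor `i^k`, by the Fricke relation.
  have key : (∫ t in Ioi (0 : ℝ), ∑' m : ℕ, a ((m : ℤ) - n₀) * (kerW 0 (D m) (C + Y) t : ℂ))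
      = Complex.I ^ (k : ℂ) *
        ∫ t in Ioi (0 : ℝ), ∑' m : ℕ, b ((m : ℤ) - n₀) * (kerW (-k) C (D m + Y) t : ℂ) := by
    rw [← integral_const_mul]
    refine setIntegral_congr_fun measurableSet_Ioi fun t ht => ?_
    have ht : 0 < t := ht
    have htC : (t : ℂ) ≠ 0 := by exact_mod_cast ht.ne'
    have L : ∑' m : ℕ, a ((m : ℤ) - n₀) * (kerW 0 (D m) (C + Y) t : ℂ)
        = f (Complex.I * ((t / √(N : ℝ) : ℝ) : ℂ))
          * ((Real.exp (-(C * t + (C + Y) / t)) * t ^ (-1 : ℝ) : ℝ) : ℂ) := by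
      rw [hf _ (by simp; positivity), ← tsum_mul_right]
      refine tsum_congr fun m => ?_
      have e : (2 * π * Complex.I * (((m : ℝ) - n₀ : ℝ) : ℂ) *
          (Complex.I * ((t / √(N : ℝ) : ℝ) : ℂ)))
          = ((-(2 * π * ((m : ℝ) - n₀) / √(N : ℝ) * t) : ℝ) : ℂ) := by
        push_cast
        linear_combination (2 * π * ((m : ℂ) - n₀) * (t / (√(N : ℝ) : ℝ))) * Complex.I_mul_I
      rw [e, ← Complex.ofReal_exp, mul_assoc, ← Complex.ofReal_mul, ← mul_assoc, ← Real.exp_add]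
      simp only [kerW, hD, zero_sub]
      congr 4
      ring
    have R : ∑' m : ℕ, b ((m : ℤ) - n₀) * (kerW (-k) C (D m + Y) t : ℂ)
        = g (Complex.I * ((1 / (√(N : ℝ) * t) : ℝ) : ℂ))
          * ((Real.exp (-(C * t + (C + Y) / t)) * t ^ (-k - 1) : ℝ) : ℂ) := by
      rw [hgexp _ (by simp; positivity), ← tsum_mul_right]
      refine tsum_congr fun m => ?_
      have e : (2 * π * Complex.I * (((m : ℝ) - n₀ : ℝ) : ℂ) *
          (Complex.I * ((1 / (√(N : ℝ) * t) : ℝ) : ℂ)))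
          = ((-(2 * π * ((m : ℝ) - n₀) / √(N : ℝ) / t) : ℝ) : ℂ) := by
        push_cast
        linear_combination
          (2 * π * ((m : ℂ) - n₀) * (1 / ((√(N : ℝ) : ℝ) * t))) * Complex.I_mul_I
      rw [e, ← Complex.ofReal_exp, mul_assoc, ← Complex.ofReal_mul, ← mul_assoc, ← Real.exp_add]
      simp only [kerW, hD]
      congr 4
      ring
    have hp : t ^ (-k - 1) = t ^ (-k) * t ^ (-1 : ℝ) := by
      rw [← Real.rpow_add ht]; rfl
    rw [L, R, fricke_imag hN hg ht, hp]
    push_cast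
    ring
  refine ⟨?_, hS2, ?_⟩
  · refine (hs1.mul_left (1 / 2)).congr fun m => ?_
    rw [hT1, norm_mul, norm_mul, Complex.norm_real, Real.norm_of_nonneg (intW_nonneg _ _ _)]
    norm_num
  · rw [mul_assoc, ← tsum_mul_left, tsum_congr hT1, tsum_congr hT2, tsum_mul_left, tsum_mul_left,
      H1.tsum_eq, H2.tsum_eq, key]
    ring
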